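/- (Gaussian–generalized-Cauchy KL divergence, first bound.) Let d ≥ 1. Let N_d(μ, ρ²I_d) be the spherical Gaussian probability measure on ℝ^d with mean μ ∈ ℝ^d and covariance ρ²I_d, ρ > 0, and let 𝒰_d be the generalized Cauchy distribution on ℝ^d, i.e. the probability measure with Lebesgue density x ↦ 2 / ( π · S_{d−1} · ( |x|^{d−1} + |x|^{d+1} ) ), where S_{d−1} = d·π^{d/2}/Γ(d/2 + 1) is the surface area of the unit sphere in ℝ^d and |·| is the Euclidean norm. Then D_KL( N_d(μ, ρ²I_d) ‖ 𝒰_d ) ≤ ((d+1)/2)·log( 1 + |μ|²/(d ρ²) ) + log( (1 + d ρ²)/ρ ). -/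

import Mathlib

open MeasureTheory Real
open scoped Classical

/-- The Kullback--Leibler divergence between two measures, valued in the extended reals:
`∫ log (dQ/dU) dQ` when `Q ≪ U` and the log-likelihood ratio is `Q`-integrable,
and `+∞` otherwise. -/
noncomputable def klDiv {F : Type*} [MeasurableSpace F] (Q U : Measure F) : EReal :=
  if Q ≪ U ∧ Integrable (llr Q U) Q then ((∫ f, llr Q U f ∂Q : ℝ) : EReal) else ⊤

/-- The spherical Gaussian measure `N_d(μ, ρ²I_d)` on `ℝ^d`, with Lebesgue density
`x ↦ (2πρ²)^{−d/2} exp(−|x−μ|²/(2ρ²))`. -/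
noncomputable def gaussSph (d : ℕ) (μ : EuclideanSpace ℝ (Fin d)) (ρ : ℝ) :
    Measure (EuclideanSpace ℝ (Fin d)) :=
  volume.withDensity fun x =>
    ENNReal.ofReal ((2 * Real.pi * ρ^2) ^ (-(d:ℝ)/2) * Real.exp (-‖x - μ‖^2 / (2 * ρ^2)))

/-- The surface area `S_{d−1} = d·π^{d/2}/Γ(d/2+1)` of the unit sphere in `ℝ^d`. -/
noncomputable def sphereArea (d : ℕ) : ℝ :=
  d * Real.pi ^ ((d:ℝ)/2) / Real.Gamma ((d:ℝ)/2 + 1)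

/-- The generalized Cauchy distribution on `ℝ^d`, with Lebesgue density
`x ↦ 2/(π S_{d−1} (|x|^{d−1} + |x|^{d+1}))`. -/
noncomputable def genCauchy (d : ℕ) : Measure (EuclideanSpace ℝ (Fin d)) :=
  volume.withDensity fun x =>
    ENNReal.ofReal (2 / (Real.pi * sphereArea d * (‖x‖^(d-1) + ‖x‖^(d+1))))

/-!
Away from the origin, the log-likelihood ratio of the Gaussian to the generalized Cauchy density is
`c - |x - μ|² / (2ρ²) + (d - 1) log |x| + log (1 + |x|²)` with `c` a constant, so the divergence is
explicit up to the Gaussian means of `log |x|` and `log (1 + |x|²)`. Since `|x|²` has mean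
`|μ|² + dρ²`, Jensen's inequality bounds both.

In the resulting bound the dimension enters through `S_{d-1}`. Log-convexity of `Γ`, the duplication
formula and Stirling's bound for `d!` give `π d (d / 2e)^d ≤ Γ(d/2 + 1)²`, which is sharp enough for
all terms of order `d log d`, `d` and `log d` to cancel and to leave the constant
`log (π / 4) / 2 ≤ 0`.
-/

section Measure

variable {α : Type*} [MeasurableSpace α] {ν : Measure α}

theorem integral_log_le_log_integral [IsProbabilityMeasure ν] {f : α → ℝ}
    (hf_pos : ∀ᵐ x ∂ν, 0 < f x) (hf : Integrable f ν) (hlog : Integrable (fun x => log (f x)) ν) :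
    ∫ x, log (f x) ∂ν ≤ log (∫ x, f x ∂ν) := by
  have hexp : (fun x => exp (log (f x))) =ᵐ[ν] f := hf_pos.mono fun x hx => exp_log hx
  have jensen : exp (∫ x, log (f x) ∂ν) ≤ ∫ x, f x ∂ν :=
    calc exp (∫ x, log (f x) ∂ν)
      _ ≤ ∫ x, exp (log (f x)) ∂ν :=
        convexOn_exp.map_integral_le continuous_exp.continuousOn isClosed_univ
          (ae_of_all _ fun _ => Set.mem_univ _) hlog (hf.congr hexp.symm)
      _ = ∫ x, f x ∂ν := integral_congr_ae hexp
  exact (le_log_iff_exp_le ((exp_pos _).trans_le jensen)).2 jensen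

theorem withDensity_absolutelyContinuous_withDensity (f : α → ENNReal) {g : α → ENNReal}
    (hg : AEMeasurable g ν) (hg_ne : ∀ᵐ x ∂ν, g x ≠ 0) :
    ν.withDensity f ≪ ν.withDensity g :=
  (withDensity_absolutelyContinuous ν f).trans (withDensity_absolutelyContinuous' hg hg_ne)

variable [SigmaFinite ν] {f g : α → ℝ}

theorem llr_withDensity_ofReal (hf : Measurable f) (hg : Measurable g) (hg_pos : ∀ᵐ x ∂ν, 0 < g x) :
    llr (ν.withDensity fun x => ENNReal.ofReal (f x)) (ν.withDensity fun x => ENNReal.ofReal (g x))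
      =ᵐ[ν.withDensity fun x => ENNReal.ofReal (f x)] fun x => log (f x) - log (g x) := by
  refine (ae_withDensity_iff hf.ennreal_ofReal).2 ?_
  filter_upwards [hg_pos, Measure.rnDeriv_withDensity ν hf.ennreal_ofReal,
    Measure.rnDeriv_withDensity_right (ν.withDensity fun x => ENNReal.ofReal (f x)) ν
      hg.ennreal_ofReal.aemeasurable (hg_pos.mono fun x hx => (ENNReal.ofReal_pos.2 hx).ne')
      (ae_of_all _ fun x => ENNReal.ofReal_ne_top)] with x hgx hrn_left hrn_right hfx_ne
  have hfx : 0 < f x := ENNReal.ofReal_pos.1 (pos_iff_ne_zero.2 hfx_ne)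
  rw [llr, hrn_right, hrn_left, ENNReal.toReal_mul, ENNReal.toReal_inv,
    ENNReal.toReal_ofReal hgx.le, ENNReal.toReal_ofReal hfx.le, log_mul (by positivity) hfx.ne',
    log_inv, neg_add_eq_sub]

theorem klDiv_withDensity_ofReal (hf : Measurable f) (hg : Measurable g)
    (hg_pos : ∀ᵐ x ∂ν, 0 < g x)
    (hint : Integrable (fun x => log (f x) - log (g x))
      (ν.withDensity fun x => ENNReal.ofReal (f x))) :
    klDiv (ν.withDensity fun x => ENNReal.ofReal (f x))
        (ν.withDensity fun x => ENNReal.ofReal (g x)) =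
      ((∫ x, (log (f x) - log (g x)) ∂ν.withDensity fun x => ENNReal.ofReal (f x) : ℝ) :
        EReal) := by
  have hllr := llr_withDensity_ofReal hf hg hg_pos
  have hac := withDensity_absolutelyContinuous_withDensity (fun x => ENNReal.ofReal (f x))
    hg.ennreal_ofReal.aemeasurable (hg_pos.mono fun x hx => (ENNReal.ofReal_pos.2 hx).ne')
  rw [klDiv, if_pos ⟨hac, hint.congr hllr.symm⟩, integral_congr_ae hllr]

end Measure

section Gamma

theorem sqrt_mul_Gamma_add_half_le {x : ℝ} (hx : 0 ≤ x) :
    √x * Gamma (x + 1 / 2) ≤ Gamma (x + 1) := by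
  rcases hx.eq_or_lt with rfl | hx
  · simp
  have : 0 < Gamma x := Gamma_pos_of_pos hx
  have log_convex : Gamma (x + 1 / 2) ≤ √(Gamma x) * √(Gamma (x + 1)) := by
    have := Gamma_mul_add_mul_le_rpow_Gamma_mul_rpow_Gamma hx (add_pos hx one_pos)
      one_half_pos one_half_pos (add_halves 1)
    rwa [← sqrt_eq_rpow, ← sqrt_eq_rpow, show 1 / 2 * x + 1 / 2 * (x + 1) = x + 1 / 2 by ring]
      at this
  calc √x * Gamma (x + 1 / 2)
    _ ≤ √x * (√(Gamma x) * √(Gamma (x + 1))) := by gcongr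
    _ = √(Gamma (x + 1)) * √(Gamma (x + 1)) := by
      rw [Gamma_add_one hx.ne', sqrt_mul hx.le]; ring
    _ = Gamma (x + 1) := mul_self_sqrt (Gamma_pos_of_pos (by positivity)).le

theorem sqrt_pi_mul_mul_Gamma_two_mul_add_one_le {x : ℝ} (hx : 0 ≤ x) :
    √(π * x) * Gamma (2 * x + 1) ≤ 2 ^ (2 * x) * Gamma (x + 1) ^ 2 := by
  have duplication : Gamma (x + 1 / 2) * Gamma (x + 1) * 2 ^ (2 * x) = √π * Gamma (2 * x + 1) := by
    have := Gamma_mul_Gamma_add_half (x + 1 / 2)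
    rw [show x + 1 / 2 + 1 / 2 = x + 1 by ring, show 2 * (x + 1 / 2) = 2 * x + 1 by ring,
      show 1 - (2 * x + 1) = -(2 * x) by ring] at this
    rw [this, mul_right_comm, mul_assoc (Gamma _), ← rpow_add two_pos, neg_add_cancel, rpow_zero]
    ring
  have : 0 < Gamma (x + 1) := Gamma_pos_of_pos (by positivity)
  calc √(π * x) * Gamma (2 * x + 1)
    _ = 2 ^ (2 * x) * (√x * Gamma (x + 1 / 2)) * Gamma (x + 1) := by
      rw [sqrt_mul pi_pos.le, mul_right_comm, ← duplication]; ring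
    _ ≤ 2 ^ (2 * x) * Gamma (x + 1) * Gamma (x + 1) := by
      gcongr; exact sqrt_mul_Gamma_add_half_le hx
    _ = 2 ^ (2 * x) * Gamma (x + 1) ^ 2 := by ring

theorem stirling_le_sq_Gamma_half_add_one (n : ℕ) :
    π * n * (n / (2 * exp 1)) ^ n ≤ Gamma ((n : ℝ) / 2 + 1) ^ 2 := by
  have hΓ := sqrt_pi_mul_mul_Gamma_two_mul_add_one_le (x := (n : ℝ) / 2) (by positivity)
  rw [mul_div_cancel₀ _ two_ne_zero, Gamma_nat_eq_factorial, rpow_natCast] at hΓ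
  have hsqrt : √(π * (n / 2)) * √(2 * π * n) = π * n := by
    rw [← sqrt_mul (by positivity), show π * (n / 2) * (2 * π * n) = (π * n) ^ 2 by ring,
      sqrt_sq (by positivity)]
  refine le_of_mul_le_mul_left ?_ (by positivity : (0 : ℝ) < 2 ^ n)
  calc (2 : ℝ) ^ n * (π * n * (n / (2 * exp 1)) ^ n)
    _ = √(π * (n / 2)) * (√(2 * π * n) * (n / exp 1) ^ n) := by
      rw [← mul_assoc √(π * _), hsqrt, mul_left_comm, ← mul_pow,
        show 2 * ((n : ℝ) / (2 * exp 1)) = n / exp 1 by field_simp]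
    _ ≤ √(π * (n / 2)) * n.factorial := by gcongr; exact Stirling.le_factorial_stirling n
    _ ≤ 2 ^ n * Gamma ((n : ℝ) / 2 + 1) ^ 2 := hΓ

theorem sphereArea_pos (d : ℕ) [NeZero d] : 0 < sphereArea d := by
  have hd : (0 : ℝ) < d := Nat.cast_pos.2 (NeZero.pos d)
  have : 0 < Gamma ((d : ℝ) / 2 + 1) := Gamma_pos_of_pos (by positivity)
  unfold sphereArea
  positivity

theorem sq_sphereArea_le (d : ℕ) :
    sphereArea d ^ 2 ≤ d / π * (2 * π * exp 1 / d) ^ d := by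
  rcases d.eq_zero_or_pos with rfl | hd
  · simp [sphereArea]
  have hpow : (π ^ ((d : ℝ) / 2)) ^ 2 = π ^ d := by
    rw [← rpow_mul_natCast pi_pos.le, Nat.cast_ofNat, div_mul_cancel₀ _ two_ne_zero, rpow_natCast]
  calc sphereArea d ^ 2
    _ = d ^ 2 * π ^ d / Gamma ((d : ℝ) / 2 + 1) ^ 2 := by rw [sphereArea, div_pow, mul_pow, hpow]
    _ ≤ d ^ 2 * π ^ d / (π * d * (d / (2 * exp 1)) ^ d) := by
      gcongr; exact stirling_le_sq_Gamma_half_add_one d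
    _ = d / π * (2 * π * exp 1 / d) ^ d := by
      simp only [div_pow, mul_pow]; field_simp

theorem log_pi_mul_sphereArea_div_two_le (d : ℕ) [NeZero d] :
    log (π * sphereArea d / 2) ≤ (log d + d * (log (2 * π) + 1 - log d)) / 2 := by
  have hd : (0 : ℝ) < d := Nat.cast_pos.2 (NeZero.pos d)
  have hS := sphereArea_pos d
  have hsq : (π * sphereArea d / 2) ^ 2 ≤ d * (2 * π * exp 1 / d) ^ d :=
    calc (π * sphereArea d / 2) ^ 2
      _ = π ^ 2 / 4 * sphereArea d ^ 2 := by ring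
      _ ≤ π ^ 2 / 4 * (d / π * (2 * π * exp 1 / d) ^ d) := by gcongr; exact sq_sphereArea_le d
      _ = π / 4 * (d * (2 * π * exp 1 / d) ^ d) := by field_simp
      _ ≤ d * (2 * π * exp 1 / d) ^ d :=
        mul_le_of_le_one_left (by positivity) ((div_le_one four_pos).2 pi_le_four)
  have hlog := log_le_log (by positivity) hsq
  rw [log_mul hd.ne' (by positivity), log_pow, log_pow, log_div (by positivity) hd.ne',
    log_mul (by positivity) (exp_ne_zero 1), log_exp, Nat.cast_ofNat] at hlog
  linarith

end Gamma

theorem pow_pred_mul_rpow {n : ℕ} (hn : 0 < n) {r : ℝ} (hr : 0 < r) (s : ℝ) :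
    r ^ (n - 1) * r ^ s = r ^ (n - 1 + s) := by
  rw [← rpow_natCast, Nat.cast_pred hn, ← rpow_add hr]

theorem abs_log_le_rpow_add_rpow_neg {t ε : ℝ} (ht : 0 ≤ t) (hε : 0 < ε) :
    |log t| ≤ (t ^ ε + t ^ (-ε)) / ε := by
  have hlog := log_le_rpow_div ht hε
  have hlog_inv := log_le_rpow_div (inv_nonneg.2 ht) hε
  rw [log_inv, inv_rpow ht, ← rpow_neg ht] at hlog_inv
  have hpos : 0 ≤ t ^ ε / ε := by positivity
  have hneg : 0 ≤ t ^ (-ε) / ε := by positivity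
  rw [add_div, abs_le]
  constructor <;> linarith

section RadialIntegral

open Module

variable {V : Type*} [NormedAddCommGroup V] [InnerProductSpace ℝ V] [FiniteDimensional ℝ V]
  [MeasurableSpace V] [BorelSpace V] [Nontrivial V] {b s : ℝ}

theorem integrable_norm_rpow_mul_exp_neg_mul_sq_norm (hb : 0 < b) (hs : -(finrank ℝ V : ℝ) < s) :
    Integrable fun x : V => ‖x‖ ^ s * exp (-b * ‖x‖ ^ 2) := by
  refine (integrable_fun_norm_addHaar volume (f := fun r => r ^ s * exp (-b * r ^ 2))).2 ?_
  have hIoi := integrableOn_rpow_mul_exp_neg_mul_sq hb (by linarith : -1 < finrank ℝ V - 1 + s)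
  refine hIoi.congr_fun (fun r hr => ?_) measurableSet_Ioi
  simp only [smul_eq_mul, ← mul_assoc, pow_pred_mul_rpow finrank_pos hr]

theorem integral_norm_rpow_mul_exp_neg_mul_sq_norm_eq_ball (hb : 0 < b)
    (hs : -(finrank ℝ V : ℝ) < s) :
    ∫ x : V, ‖x‖ ^ s * exp (-b * ‖x‖ ^ 2) =
      finrank ℝ V * volume.real (Metric.ball (0 : V) 1) *
        (b ^ (-(finrank ℝ V + s) / 2) * (1 / 2) * Gamma ((finrank ℝ V + s) / 2)) := by
  have hIoi := integral_rpow_mul_exp_neg_mul_rpow two_pos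
    (by linarith : -1 < finrank ℝ V - 1 + s) hb
  rw [show finrank ℝ V - 1 + s + 1 = finrank ℝ V + s by ring] at hIoi
  rw [integral_fun_norm_addHaar volume fun r => r ^ s * exp (-b * r ^ 2), ← hIoi, nsmul_eq_mul,
    smul_eq_mul, mul_assoc]
  congr 2
  refine setIntegral_congr_fun measurableSet_Ioi fun r hr => ?_
  simp only [smul_eq_mul, rpow_two, ← mul_assoc, pow_pred_mul_rpow finrank_pos hr]

theorem integral_norm_rpow_mul_exp_neg_mul_sq_norm (hb : 0 < b) (hs : -(finrank ℝ V : ℝ) < s) :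
    ∫ x : V, ‖x‖ ^ s * exp (-b * ‖x‖ ^ 2) =
      (π / b) ^ ((finrank ℝ V : ℝ) / 2) *
        (Gamma ((finrank ℝ V + s) / 2) / Gamma ((finrank ℝ V : ℝ) / 2)) * b ^ (-s / 2) := by
  have hn : (0 : ℝ) < finrank ℝ V := Nat.cast_pos.2 finrank_pos
  have : 0 < Gamma ((finrank ℝ V : ℝ) / 2) := Gamma_pos_of_pos (by positivity)
  have total := integral_norm_rpow_mul_exp_neg_mul_sq_norm_eq_ball (V := V) hb (s := 0)
    (by linarith)
  simp only [rpow_zero, one_mul, add_zero, GaussianFourier.integral_rexp_neg_mul_sq_norm hb]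
    at total
  rw [integral_norm_rpow_mul_exp_neg_mul_sq_norm_eq_ball hb hs, total, neg_add, add_div,
    rpow_add hb]
  field_simp

theorem integral_sq_norm_mul_exp_neg_mul_sq_norm (hb : 0 < b) :
    ∫ x : V, ‖x‖ ^ 2 * exp (-b * ‖x‖ ^ 2) =
      finrank ℝ V / (2 * b) * (π / b) ^ ((finrank ℝ V : ℝ) / 2) := by
  have hn : (0 : ℝ) < finrank ℝ V := Nat.cast_pos.2 finrank_pos
  have : 0 < Gamma ((finrank ℝ V : ℝ) / 2) := Gamma_pos_of_pos (by positivity)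
  have := integral_norm_rpow_mul_exp_neg_mul_sq_norm (V := V) hb (s := 2) (by linarith)
  simp only [rpow_two] at this
  rw [this, add_div, div_self two_ne_zero, Gamma_add_one (by positivity), neg_div,
    div_self two_ne_zero, rpow_neg_one]
  field_simp

end RadialIntegral

section Gaussian

variable {d : ℕ} {μ : EuclideanSpace ℝ (Fin d)} {ρ : ℝ}

/-- The Lebesgue density of the spherical Gaussian measure `gaussSph d μ ρ`. -/
noncomputable def gaussDensity (d : ℕ) (μ : EuclideanSpace ℝ (Fin d)) (ρ : ℝ)
    (x : EuclideanSpace ℝ (Fin d)) : ℝ :=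
  (2 * π * ρ ^ 2) ^ (-(d : ℝ) / 2) * exp (-‖x - μ‖ ^ 2 / (2 * ρ ^ 2))

theorem gaussSph_eq_withDensity :
    gaussSph d μ ρ = volume.withDensity fun x => ENNReal.ofReal (gaussDensity d μ ρ x) :=
  rfl

theorem measurable_gaussDensity : Measurable (gaussDensity d μ ρ) := by
  unfold gaussDensity
  fun_prop

theorem gaussDensity_nonneg (x : EuclideanSpace ℝ (Fin d)) : 0 ≤ gaussDensity d μ ρ x := by
  unfold gaussDensity
  positivity

theorem integrable_gaussSph_iff {f : EuclideanSpace ℝ (Fin d) → ℝ} :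
    Integrable f (gaussSph d μ ρ) ↔ Integrable fun x => gaussDensity d μ ρ x * f x := by
  rw [gaussSph_eq_withDensity, integrable_withDensity_iff_integrable_smul'
    measurable_gaussDensity.ennreal_ofReal (ae_of_all _ fun _ => ENNReal.ofReal_lt_top)]
  simp only [ENNReal.toReal_ofReal (gaussDensity_nonneg _), smul_eq_mul]

theorem integral_gaussSph (f : EuclideanSpace ℝ (Fin d) → ℝ) :
    ∫ x, f x ∂gaussSph d μ ρ = ∫ x, gaussDensity d μ ρ x * f x := by
  rw [gaussSph_eq_withDensity, integral_withDensity_eq_integral_toReal_smul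
    measurable_gaussDensity.ennreal_ofReal (ae_of_all _ fun _ => ENNReal.ofReal_lt_top)]
  simp only [ENNReal.toReal_ofReal (gaussDensity_nonneg _), smul_eq_mul]

theorem integral_gaussSph_radial (φ : ℝ → ℝ) :
    ∫ x, φ ‖x - μ‖ ∂gaussSph d μ ρ = (2 * π * ρ ^ 2) ^ (-(d : ℝ) / 2) *
      ∫ x : EuclideanSpace ℝ (Fin d), φ ‖x‖ * exp (-(1 / (2 * ρ ^ 2)) * ‖x‖ ^ 2) := by
  rw [integral_gaussSph, ← integral_const_mul,
    ← integral_sub_right_eq_self (fun x => _ * (φ ‖x‖ * _)) μ]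
  refine integral_congr_ae (ae_of_all _ fun x => ?_)
  simp only [gaussDensity]
  ring_nf

theorem integral_comp_two_smul_sub_gaussSph (f : EuclideanSpace ℝ (Fin d) → ℝ) :
    ∫ x, f (2 • μ - x) ∂gaussSph d μ ρ = ∫ x, f x ∂gaussSph d μ ρ := by
  rw [integral_gaussSph, integral_gaussSph, ← integral_sub_left_eq_self _ volume (2 • μ)]
  refine integral_congr_ae (ae_of_all _ fun x => ?_)
  simp only [gaussDensity, sub_sub_cancel]
  rw [← norm_neg (2 • μ - x - μ), show -(2 • μ - x - μ) = x - μ by rw [two_smul]; abel]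

-- Trading the centre `μ` for a doubled variance reduces integrability to a radial integral at `0`.
theorem gaussDensity_le (hρ : ρ ≠ 0) (x : EuclideanSpace ℝ (Fin d)) :
    gaussDensity d μ ρ x ≤ (2 * π * ρ ^ 2) ^ (-(d : ℝ) / 2) * exp (‖μ‖ ^ 2 / (2 * ρ ^ 2)) *
      exp (-(1 / (4 * ρ ^ 2)) * ‖x‖ ^ 2) := by
  have hnorm : ‖x‖ ^ 2 ≤ 2 * ‖x - μ‖ ^ 2 + 2 * ‖μ‖ ^ 2 := by
    have := parallelogram_law_with_norm ℝ (x - μ) μ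
    rw [sub_add_cancel] at this
    linarith [sq_nonneg ‖x - μ - μ‖]
  rw [gaussDensity, mul_assoc _ (exp _), ← exp_add]
  gcongr
  calc -‖x - μ‖ ^ 2 / (2 * ρ ^ 2)
    _ = (-2 * ‖x - μ‖ ^ 2) / (4 * ρ ^ 2) := by field_simp; norm_num
    _ ≤ (2 * ‖μ‖ ^ 2 - ‖x‖ ^ 2) / (4 * ρ ^ 2) := by gcongr; linarith
    _ = ‖μ‖ ^ 2 / (2 * ρ ^ 2) + -(1 / (4 * ρ ^ 2)) * ‖x‖ ^ 2 := by field_simp; ring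

theorem gaussian_normalization (d : ℕ) (hρ : ρ ≠ 0) :
    (2 * π * ρ ^ 2) ^ (-(d : ℝ) / 2) * (π / (1 / (2 * ρ ^ 2))) ^ ((d : ℝ) / 2) = 1 := by
  rw [show π / (1 / (2 * ρ ^ 2)) = 2 * π * ρ ^ 2 by field_simp, ← rpow_add (by positivity),
    neg_div, neg_add_cancel, rpow_zero]

theorem isProbabilityMeasure_gaussSph (hρ : ρ ≠ 0) : IsProbabilityMeasure (gaussSph d μ ρ) := by
  have mass := integral_gaussSph_radial (μ := μ) (ρ := ρ) fun _ => 1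
  simp only [one_mul] at mass
  rw [GaussianFourier.integral_rexp_neg_mul_sq_norm (by positivity), finrank_euclideanSpace_fin,
    gaussian_normalization d hρ, integral_const, smul_eq_mul, mul_one] at mass
  exact isProbabilityMeasure_iff_real.2 mass

variable [NeZero d]

theorem integrable_norm_rpow_gaussSph (hρ : ρ ≠ 0) {s : ℝ} (hs : -(d : ℝ) < s) :
    Integrable (fun x => ‖x‖ ^ s) (gaussSph d μ ρ) := by
  have hradial := integrable_norm_rpow_mul_exp_neg_mul_sq_norm (V := EuclideanSpace ℝ (Fin d))
    (by positivity : 0 < 1 / (4 * ρ ^ 2)) (s := s) (by rwa [finrank_euclideanSpace_fin])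
  refine integrable_gaussSph_iff.2 ((hradial.const_mul
    ((2 * π * ρ ^ 2) ^ (-(d : ℝ) / 2) * exp (‖μ‖ ^ 2 / (2 * ρ ^ 2)))).mono'
    (measurable_gaussDensity.mul (by fun_prop)).aestronglyMeasurable (ae_of_all _ fun x => ?_))
  rw [norm_of_nonneg (mul_nonneg (gaussDensity_nonneg x) (by positivity)), mul_left_comm,
    mul_comm]
  gcongr
  exact gaussDensity_le hρ x

theorem integrable_sq_norm_sub_gaussSph (hρ : ρ ≠ 0) (a : EuclideanSpace ℝ (Fin d)) :
    Integrable (fun x => ‖x - a‖ ^ 2) (gaussSph d μ ρ) := by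
  have := isProbabilityMeasure_gaussSph (μ := μ) hρ
  have hsq := integrable_norm_rpow_gaussSph (μ := μ) hρ
    (by linarith [d.cast_nonneg (α := ℝ)] : -(d : ℝ) < 2)
  simp only [rpow_two] at hsq
  have hid : MemLp id 2 (gaussSph d μ ρ) :=
    (memLp_two_iff_integrable_sq_norm aestronglyMeasurable_id).2 hsq
  exact (memLp_two_iff_integrable_sq_norm (by fun_prop)).1 (hid.sub (memLp_const a))

theorem integrable_sq_norm_gaussSph (hρ : ρ ≠ 0) :
    Integrable (fun x => ‖x‖ ^ 2) (gaussSph d μ ρ) := by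
  simpa only [sub_zero] using integrable_sq_norm_sub_gaussSph hρ 0

theorem integral_sq_norm_sub_gaussSph (hρ : ρ ≠ 0) :
    ∫ x, ‖x - μ‖ ^ 2 ∂gaussSph d μ ρ = d * ρ ^ 2 := by
  rw [integral_gaussSph_radial fun r => r ^ 2,
    integral_sq_norm_mul_exp_neg_mul_sq_norm (by positivity), finrank_euclideanSpace_fin,
    mul_left_comm, gaussian_normalization d hρ]
  field_simp

theorem integral_sq_norm_gaussSph (hρ : ρ ≠ 0) :
    ∫ x, ‖x‖ ^ 2 ∂gaussSph d μ ρ = ‖μ‖ ^ 2 + d * ρ ^ 2 := by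
  have := isProbabilityMeasure_gaussSph (μ := μ) hρ
  have hnorm := integrable_sq_norm_gaussSph (μ := μ) hρ
  have hdev := integrable_sq_norm_sub_gaussSph (μ := μ) hρ μ
  have parallelogram : ∀ x, ‖2 • μ - x‖ ^ 2 = 2 * ‖x - μ‖ ^ 2 + 2 * ‖μ‖ ^ 2 - ‖x‖ ^ 2 := by
    intro x
    have := parallelogram_law_with_norm ℝ (x - μ) μ
    rw [sub_add_cancel, sub_sub, ← two_smul ℕ μ, norm_sub_rev x] at this
    linarith
  have reflection := integral_comp_two_smul_sub_gaussSph (μ := μ) (ρ := ρ) fun x => ‖x‖ ^ 2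
  simp only [parallelogram] at reflection
  rw [integral_sub ((hdev.const_mul 2).fun_add (integrable_const _)) hnorm,
    integral_add (hdev.const_mul 2) (integrable_const _), integral_const_mul, integral_const,
    probReal_univ, one_smul, integral_sq_norm_sub_gaussSph hρ] at reflection
  linarith

theorem integrable_log_norm_gaussSph (hρ : ρ ≠ 0) :
    Integrable (fun x => log ‖x‖) (gaussSph d μ ρ) := by
  have hd : (1 : ℝ) ≤ d := Nat.one_le_cast.2 (NeZero.pos d)
  have hpos := integrable_norm_rpow_gaussSph (μ := μ) hρ (by linarith : -(d : ℝ) < 1 / 2)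
  have hneg := integrable_norm_rpow_gaussSph (μ := μ) hρ (by linarith : -(d : ℝ) < -(1 / 2))
  exact ((hpos.add hneg).div_const (1 / 2)).mono'
    (measurable_log.comp measurable_norm).aestronglyMeasurable
    (ae_of_all _ fun x => abs_log_le_rpow_add_rpow_neg (norm_nonneg x) one_half_pos)

theorem integrable_log_one_add_sq_norm_gaussSph (hρ : ρ ≠ 0) :
    Integrable (fun x => log (1 + ‖x‖ ^ 2)) (gaussSph d μ ρ) := by
  refine (integrable_sq_norm_gaussSph hρ).mono'
    (Measurable.log (by fun_prop)).aestronglyMeasurable (ae_of_all _ fun x => ?_)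
  rw [norm_of_nonneg (log_nonneg (le_add_of_nonneg_right (sq_nonneg _)))]
  linarith [log_le_sub_one_of_pos (by positivity : 0 < 1 + ‖x‖ ^ 2)]

theorem ae_ne_zero_gaussSph : ∀ᵐ x ∂gaussSph d μ ρ, x ≠ 0 :=
  (withDensity_absolutelyContinuous _ _).ae_le (Measure.ae_ne volume 0)

theorem integral_log_norm_gaussSph_le (hρ : ρ ≠ 0) :
    ∫ x, log ‖x‖ ∂gaussSph d μ ρ ≤ log (‖μ‖ ^ 2 + d * ρ ^ 2) / 2 := by
  have := isProbabilityMeasure_gaussSph (μ := μ) hρ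
  have hlog_sq : ∀ x : EuclideanSpace ℝ (Fin d), log (‖x‖ ^ 2) = 2 * log ‖x‖ := fun x => by
    rw [log_pow, Nat.cast_ofNat]
  have jensen := integral_log_le_log_integral
    (ae_ne_zero_gaussSph.mono fun x hx => pow_pos (norm_pos_iff.2 hx) 2)
    (integrable_sq_norm_gaussSph (μ := μ) hρ)
    (by simpa only [hlog_sq] using (integrable_log_norm_gaussSph hρ).const_mul 2)
  simp only [hlog_sq, integral_const_mul, integral_sq_norm_gaussSph hρ] at jensen
  linarith

theorem integral_log_one_add_sq_norm_gaussSph_le (hρ : ρ ≠ 0) :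
    ∫ x, log (1 + ‖x‖ ^ 2) ∂gaussSph d μ ρ ≤ log (1 + (‖μ‖ ^ 2 + d * ρ ^ 2)) := by
  have := isProbabilityMeasure_gaussSph (μ := μ) hρ
  have hsq := integrable_sq_norm_gaussSph (μ := μ) hρ
  have jensen := integral_log_le_log_integral (ae_of_all _ fun x => by positivity)
    ((integrable_const 1).fun_add hsq) (integrable_log_one_add_sq_norm_gaussSph hρ)
  rwa [integral_add (integrable_const 1) hsq, integral_const, probReal_univ, one_smul,
    integral_sq_norm_gaussSph hρ] at jensen

end Gaussian

section KLDivergence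

variable {d : ℕ} {μ : EuclideanSpace ℝ (Fin d)} {ρ : ℝ}

/-- The Lebesgue density of the generalized Cauchy distribution `genCauchy d`. At `x = 0` it takes
the junk value `2 / 0 = 0` when `2 ≤ d`, so it is positive only away from the origin. -/
noncomputable def genCauchyDensity (d : ℕ) (x : EuclideanSpace ℝ (Fin d)) : ℝ :=
  2 / (π * sphereArea d * (‖x‖ ^ (d - 1) + ‖x‖ ^ (d + 1)))

theorem measurable_genCauchyDensity : Measurable (genCauchyDensity d) := by
  unfold genCauchyDensity
  fun_prop

theorem log_gaussDensity (hρ : ρ ≠ 0) (x : EuclideanSpace ℝ (Fin d)) :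
    log (gaussDensity d μ ρ x) =
      -(d : ℝ) / 2 * log (2 * π * ρ ^ 2) - ‖x - μ‖ ^ 2 / (2 * ρ ^ 2) := by
  rw [gaussDensity, log_mul (by positivity) (exp_ne_zero _), log_rpow (by positivity), log_exp]
  ring

variable [NeZero d]

theorem genCauchyDensity_pos {x : EuclideanSpace ℝ (Fin d)} (hx : x ≠ 0) :
    0 < genCauchyDensity d x := by
  have := sphereArea_pos d
  have := norm_pos_iff.2 hx
  unfold genCauchyDensity
  positivity

theorem log_genCauchyDensity {x : EuclideanSpace ℝ (Fin d)} (hx : x ≠ 0) :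
    log (genCauchyDensity d x) =
      -(log (π * sphereArea d / 2) + (d - 1) * log ‖x‖ + log (1 + ‖x‖ ^ 2)) := by
  have hS := sphereArea_pos d
  have := norm_pos_iff.2 hx
  have hpow : ‖x‖ ^ (d + 1) = ‖x‖ ^ (d - 1) * ‖x‖ ^ 2 := by
    rw [← pow_add, show d - 1 + 2 = d + 1 by have := NeZero.pos d; omega]
  have hfactor : genCauchyDensity d x =
      (π * sphereArea d / 2 * ‖x‖ ^ (d - 1) * (1 + ‖x‖ ^ 2))⁻¹ := by
    rw [genCauchyDensity, hpow]
    field_simp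
  rw [hfactor, log_inv, log_mul (by positivity) (by positivity),
    log_mul (by positivity) (by positivity), log_pow, Nat.cast_pred (NeZero.pos d)]

theorem log_gaussDensity_sub_log_genCauchyDensity (hρ : ρ ≠ 0) {x : EuclideanSpace ℝ (Fin d)}
    (hx : x ≠ 0) :
    log (gaussDensity d μ ρ x) - log (genCauchyDensity d x) =
      (log (π * sphereArea d / 2) - d / 2 * log (2 * π * ρ ^ 2)) - ‖x - μ‖ ^ 2 / (2 * ρ ^ 2) +
        (d - 1) * log ‖x‖ + log (1 + ‖x‖ ^ 2) := by
  rw [log_gaussDensity hρ, log_genCauchyDensity hx]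
  ring

theorem klDiv_gaussSph_genCauchy (hρ : ρ ≠ 0) :
    klDiv (gaussSph d μ ρ) (genCauchy d) =
      ((log (π * sphereArea d / 2) - d / 2 * log (2 * π * ρ ^ 2) - d / 2 +
        (d - 1) * ∫ x, log ‖x‖ ∂gaussSph d μ ρ + ∫ x, log (1 + ‖x‖ ^ 2) ∂gaussSph d μ ρ : ℝ) :
        EReal) := by
  have := isProbabilityMeasure_gaussSph (μ := μ) hρ
  have hllr : (fun x => log (gaussDensity d μ ρ x) - log (genCauchyDensity d x))
      =ᵐ[gaussSph d μ ρ] _ :=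
    ae_ne_zero_gaussSph.mono fun x hx => log_gaussDensity_sub_log_genCauchyDensity hρ hx
  have hdev := (integrable_sq_norm_sub_gaussSph (μ := μ) hρ μ).div_const (2 * ρ ^ 2)
  have hconst_sub : Integrable (fun x => (log (π * sphereArea d / 2) -
      d / 2 * log (2 * π * ρ ^ 2)) - ‖x - μ‖ ^ 2 / (2 * ρ ^ 2)) (gaussSph d μ ρ) :=
    (integrable_const _).sub hdev
  have hnorm := (integrable_log_norm_gaussSph (μ := μ) hρ).const_mul ((d : ℝ) - 1)
  have hone_add := integrable_log_one_add_sq_norm_gaussSph (μ := μ) hρ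
  have hkl := klDiv_withDensity_ofReal measurable_gaussDensity measurable_genCauchyDensity
    ((Measure.ae_ne volume 0).mono fun x hx => genCauchyDensity_pos hx)
    (((hconst_sub.fun_add hnorm).fun_add hone_add).congr hllr.symm)
  refine hkl.trans (congrArg _ ((integral_congr_ae hllr).trans ?_))
  rw [integral_add (hconst_sub.fun_add hnorm) hone_add,
    integral_add hconst_sub hnorm, integral_sub (integrable_const _) hdev, integral_const,
    integral_div, integral_const_mul, integral_sq_norm_sub_gaussSph hρ, probReal_univ, one_smul]
  congr 3
  field_simp

theorem log_sphereArea_add_log_moments_le (hρ : 0 < ρ) {M : ℝ} (hM : 0 ≤ M) :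
    log (π * sphereArea d / 2) - d / 2 * log (2 * π * ρ ^ 2) - d / 2 +
        (d - 1) * (log (M + d * ρ ^ 2) / 2) + log (1 + (M + d * ρ ^ 2)) ≤
      (d + 1) / 2 * log (1 + M / (d * ρ ^ 2)) + log ((1 + d * ρ ^ 2) / ρ) := by
  have hd : (0 : ℝ) < d := Nat.cast_pos.2 (NeZero.pos d)
  have hsphere := log_pi_mul_sphereArea_div_two_le d
  have hvar : log (2 * π * ρ ^ 2) = log (2 * π) + 2 * log ρ := by
    rw [log_mul (by positivity) (by positivity), log_pow, Nat.cast_ofNat]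
  have hmoment : log (M + d * ρ ^ 2) = log (1 + M / (d * ρ ^ 2)) + log d + 2 * log ρ := by
    rw [show M + d * ρ ^ 2 = (1 + M / (d * ρ ^ 2)) * d * ρ ^ 2 by field_simp; ring,
      log_mul (by positivity) (by positivity), log_mul (by positivity) (by positivity), log_pow,
      Nat.cast_ofNat]
  have hone_add : log (1 + (M + d * ρ ^ 2)) ≤
      log (1 + M / (d * ρ ^ 2)) + log (1 + d * ρ ^ 2) := by
    rw [← log_mul (by positivity) (by positivity)]
    refine log_le_log (by positivity) ?_
    calc 1 + (M + d * ρ ^ 2)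
      _ ≤ 1 + (M + d * ρ ^ 2) + M / (d * ρ ^ 2) := le_add_of_nonneg_right (by positivity)
      _ = (1 + M / (d * ρ ^ 2)) * (1 + d * ρ ^ 2) := by field_simp; ring
  rw [hvar, hmoment, log_div (by positivity) hρ.ne']
  linarith

end KLDivergence

/-- **Gaussian--generalized-Cauchy KL divergence, first bound.**
`D_KL(N_d(μ,ρ²I)‖𝒰_d) ≤ ((d+1)/2) log(1 + |μ|²/(dρ²)) + log((1+dρ²)/ρ)`. -/
theorem kl_gauss_genCauchy_first (d : ℕ) (hd : 1 ≤ d)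
    (μ : EuclideanSpace ℝ (Fin d)) (ρ : ℝ) (hρ : 0 < ρ) :
    klDiv (gaussSph d μ ρ) (genCauchy d) ≤
      ((((d:ℝ) + 1) / 2 * Real.log (1 + ‖μ‖^2 / (d * ρ^2))
        + Real.log ((1 + d * ρ^2) / ρ) : ℝ) : EReal) := by
  have : NeZero d := NeZero.of_pos hd
  have hd_sub : (0 : ℝ) ≤ d - 1 := sub_nonneg.2 (Nat.one_le_cast.2 hd)
  rw [klDiv_gaussSph_genCauchy hρ.ne', EReal.coe_le_coe_iff]
  refine le_trans ?_ (log_sphereArea_add_log_moments_le hρ (sq_nonneg ‖μ‖))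
  gcongr
  · exact integral_log_norm_gaussSph_le hρ.ne'
  · exact integral_log_one_add_sq_norm_gaussSph_le hρ.ne'
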